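/- arXiv:2505.01672 — 2 statements merged into one kernel-verified Lean document; each statement's English description precedes it below -/
import Mathlib

section
/- Let (a_n)_{n∈ℕ} be a strictly decreasing sequence of nonnegative reals with limit α ≥ 0, and let k ≥ 1 be a fixed integer. Then α = 0 if and only if for every ε > 0 there exists δ > 0 such that for all n ∈ ℕ, (1/2)(a_n + a_{n+1}) < ε + δ implies a_{n+k} ≤ ε. -/
/-!
A family tending to `α` along the cofinite filter has only finitely many terms above any `ε > α`,
hence none just above `ε`. Applied to the averages, which dominate the shifted terms, this gives
the condition at every `ε > α`. The condition fails at `ε = α`: the averages come arbitrarily close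
to `α`, while no term reaches it. So the condition holds for all `ε > 0` exactly when `α` is not
one of these `ε`.
-/

open Filter Topology

section OrderedGroup

variable {ι G : Type*} [AddCommGroup G] [LinearOrder G] [IsOrderedAddMonoid G]
  {b c : ι → G} {α ε : G}

theorem exists_pos_forall_lt_add_imp_le_of_finite [Nontrivial G] (hfin : {i | ε < b i}.Finite) :
    ∃ δ > 0, ∀ i, b i < ε + δ → b i ≤ ε := by
  rcases Set.eq_empty_or_nonempty {i | ε < b i} with hempty | hne
  · obtain ⟨δ, hδ⟩ := exists_zero_lt (α := G)
    exact ⟨δ, hδ, fun i _ => not_lt.1 (Set.eq_empty_iff_forall_notMem.1 hempty i)⟩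
  · obtain ⟨m, hm, hmin⟩ := Set.exists_min_image _ b hfin hne
    refine ⟨b m - ε, sub_pos.2 hm, fun i hi => ?_⟩
    rw [add_sub_cancel] at hi
    exact not_lt.1 fun hεi => (hmin i hεi).not_gt hi

variable [TopologicalSpace G] [OrderTopology G]

theorem exists_pos_forall_lt_add_imp_le_of_tendsto_cofinite [Nontrivial G]
    (hb : Tendsto b cofinite (𝓝 α)) (hαε : α < ε) :
    ∃ δ > 0, ∀ i, b i < ε + δ → b i ≤ ε :=
  exists_pos_forall_lt_add_imp_le_of_finite <|
    (eventually_cofinite.1 (hb.eventually_lt_const hαε)).subset fun _ hi => not_lt_of_gt hi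

theorem not_exists_pos_forall_lt_add_imp_le_of_tendsto {l : Filter ι} [l.NeBot]
    (hb : Tendsto b l (𝓝 α)) (hc : ∀ i, α < c i) :
    ¬∃ δ > 0, ∀ i, b i < α + δ → c i ≤ α := by
  rintro ⟨δ, hδ, h⟩
  obtain ⟨i, hi⟩ := (hb.eventually_lt_const (lt_add_of_pos_right α hδ)).exists
  exact (h i hi).not_gt (hc i)

theorem nonpos_iff_forall_exists_pos_forall_lt_add_imp_le [Nontrivial G] [Infinite ι]
    (hb : Tendsto b cofinite (𝓝 α)) (hcb : ∀ i, c i ≤ b i) (hc : ∀ i, α < c i) :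
    α ≤ 0 ↔ ∀ ε > 0, ∃ δ > 0, ∀ i, b i < ε + δ → c i ≤ ε := by
  constructor
  · intro hα ε hε
    obtain ⟨δ, hδ, hgap⟩ :=
      exists_pos_forall_lt_add_imp_le_of_tendsto_cofinite hb (hα.trans_lt hε)
    exact ⟨δ, hδ, fun i hi => (hcb i).trans (hgap i hi)⟩
  · intro h
    exact not_lt.1 fun hα => not_exists_pos_forall_lt_add_imp_le_of_tendsto hb hc (h α hα)

end OrderedGroup

theorem lt_of_strictAnti_of_tendsto {β X : Type*} [PartialOrder β] [IsDirectedOrder β]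
    [NoMaxOrder β] [TopologicalSpace X] [Preorder X] [OrderClosedTopology X] {a : β → X} {α : X}
    (ha : StrictAnti a) (hlim : Tendsto a atTop (𝓝 α)) (n : β) : α < a n := by
  obtain ⟨m, hnm⟩ := exists_gt n
  exact (ha.antitone.le_of_tendsto hlim m).trans_lt (ha hnm)

section OrderedField

variable {K : Type*} [Field K] [LinearOrder K] [IsStrictOrderedRing K] {a : ℕ → K} {α : K} {k : ℕ}

theorem shift_le_avg_of_antitone (ha : Antitone a) (hk : 1 ≤ k) (n : ℕ) :
    a (n + k) ≤ (a n + a (n + 1)) / 2 := by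
  have hshift : a (n + k) ≤ a (n + 1) := ha (by gcongr)
  have hsucc : a (n + 1) ≤ a n := ha n.le_succ
  linarith

variable [TopologicalSpace K] [OrderTopology K]

theorem tendsto_avg_succ (hlim : Tendsto a atTop (𝓝 α)) :
    Tendsto (fun n => (a n + a (n + 1)) / 2) atTop (𝓝 α) := by
  have havg := (hlim.add ((tendsto_add_atTop_iff_nat 1).2 hlim)).div_const 2
  rwa [add_self_div_two] at havg

theorem seq_zero_iff_avg_shift_condition_general (hk : 1 ≤ k) (ha : Antitone a)
    (hlt : ∀ n, α < a n) (hlim : Tendsto a atTop (𝓝 α)) :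
    α ≤ 0 ↔ ∀ ε > 0, ∃ δ > 0, ∀ n, (a n + a (n + 1)) / 2 < ε + δ → a (n + k) ≤ ε :=
  nonpos_iff_forall_exists_pos_forall_lt_add_imp_le
    (Nat.cofinite_eq_atTop ▸ tendsto_avg_succ hlim) (shift_le_avg_of_antitone ha hk)
    fun n => hlt (n + k)

end OrderedField

/-- Lemma 5.1, (i) ⇔ (iii): for a strictly decreasing nonnegative sequence with limit α
and k ≥ 1, α = 0 iff the averaged ε-δ condition with shift k holds. -/
theorem seq_zero_iff_avg_shift_condition (a : ℕ → ℝ) (α : ℝ) (k : ℕ) (hk : 1 ≤ k)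
    (ha : StrictAnti a) (hnonneg : ∀ n, 0 ≤ a n)
    (hlim : Filter.Tendsto a Filter.atTop (nhds α)) :
    α = 0 ↔ ∀ ε > (0 : ℝ), ∃ δ > (0 : ℝ), ∀ n : ℕ,
      (a n + a (n + 1)) / 2 < ε + δ → a (n + k) ≤ ε :=
  (ge_of_tendsto' hlim hnonneg).ge_iff_eq'.symm.trans <|
    seq_zero_iff_avg_shift_condition_general hk ha.antitone
      (lt_of_strictAnti_of_tendsto ha hlim) hlim
end

section
/- Let (a_n)_{n∈ℕ} be a strictly decreasing sequence of nonnegative reals with limit α ≥ 0. If for every ε ∈ (0,∞) with ε ∉ {a_k : k ∈ ℕ} there exists δ > 0 such that for all m, n ∈ ℕ, a_m + a_n < ε + δ implies a_m + a_n ≤ ε, then α = 0. -/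
/-!
If `α > 0`, test the condition at `ε = a 0 + α`. This exceeds every term of the sequence, so it is
admissible, yet the sums `a 0 + a n` lie strictly above it and come arbitrarily close to it.
-/

open Filter Set Topology

/-- The pairwise sums of the family `a` leave a gap just above `ε`: for some `δ > 0`, no sum
`a i + a j` lies strictly between `ε` and `ε + δ`. The case `i = j` is allowed. This is the
`ε`-`δ` condition imposed on the sequence, at a single `ε`. -/
def HasPairSumGap {ι M : Type*} [AddZeroClass M] [Preorder M] (a : ι → M) (ε : M) : Prop :=
  ∃ δ > 0, ∀ i j, a i + a j < ε + δ → a i + a j ≤ ε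

theorem lt_of_tendsto_of_strictAnti {ι X : Type*}
    [PartialOrder ι] [IsDirectedOrder ι] [NoMaxOrder ι]
    [Preorder X] [TopologicalSpace X] [OrderClosedTopology X] {a : ι → X} {x : X}
    (ha : StrictAnti a) (hlim : Tendsto a atTop (𝓝 x)) (i : ι) : x < a i :=
  have ⟨j, hij⟩ := exists_gt i
  (ha.antitone.le_of_tendsto hlim j).trans_lt (ha hij)

theorem bot_add_notMem_range_of_antitone {ι M : Type*} [Preorder ι] [OrderBot ι]
    [AddZeroClass M] [Preorder M] [AddLeftStrictMono M] {a : ι → M} {c : M}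
    (ha : Antitone a) (hc : 0 < c) : a ⊥ + c ∉ range a := by
  rintro ⟨i, hi⟩
  exact (lt_add_of_pos_right (a ⊥) hc).not_ge (hi ▸ ha bot_le)

theorem not_hasPairSumGap_add_of_tendsto {ι M : Type*} [AddMonoid M]
    [LinearOrder M] [AddLeftStrictMono M] [TopologicalSpace M] [ClosedIciTopology M]
    {l : Filter ι} [l.NeBot] {a : ι → M} {x : M}
    (hlt : ∀ i, x < a i) (hlim : Tendsto a l (𝓝 x)) (i : ι) : ¬HasPairSumGap a (a i + x) := by
  rintro ⟨δ, hδ, hgap⟩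
  obtain ⟨j, hj⟩ := (hlim.eventually_lt_const (lt_add_of_pos_right x hδ)).exists
  have sum_lt : a i + a j < a i + x + δ := by
    rw [add_assoc]
    exact add_lt_add_right hj (a i)
  exact (hgap i j sum_lt).not_gt (add_lt_add_right (hlt j) (a i))

theorem seq_pairwise_sum_condition_implies_zero_general {ι M : Type*}
    [PartialOrder ι] [IsDirectedOrder ι] [OrderBot ι] [NoMaxOrder ι]
    [AddMonoid M] [LinearOrder M] [AddLeftStrictMono M]
    [TopologicalSpace M] [OrderClosedTopology M] {a : ι → M} {α : M}
    (ha : StrictAnti a) (hlim : Tendsto a atTop (𝓝 α))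
    (hgap : ∀ ε > 0, ε ∉ range a → HasPairSumGap a ε) : α ≤ 0 := by
  by_contra! hα
  have hlt : ∀ i, α < a i := lt_of_tendsto_of_strictAnti ha hlim
  have sum_pos : 0 < a ⊥ + α := (hα.trans (hlt ⊥)).trans (lt_add_of_pos_right _ hα)
  exact not_hasPairSumGap_add_of_tendsto hlt hlim ⊥
    (hgap _ sum_pos (bot_add_notMem_range_of_antitone ha.antitone hα))

/-- Lemma 5.1, (iv) ⇒ (i): for a strictly decreasing nonnegative sequence with limit α,
the pairwise-sum ε-δ condition for all ε avoiding the values of the sequence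
forces α = 0. -/
theorem seq_pairwise_sum_condition_implies_zero (a : ℕ → ℝ) (α : ℝ)
    (ha : StrictAnti a) (hnonneg : ∀ n, 0 ≤ a n)
    (hlim : Filter.Tendsto a Filter.atTop (nhds α))
    (h : ∀ ε > (0 : ℝ), ε ∉ Set.range a →
      ∃ δ > (0 : ℝ), ∀ m n : ℕ, a m + a n < ε + δ → a m + a n ≤ ε) :
    α = 0 := by
  exact (seq_pairwise_sum_condition_implies_zero_general ha hlim h).antisymm
    (ge_of_tendsto' hlim hnonneg)
end
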